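/- (Leibniz rule for the Ψ-Riemann–Liouville derivative.) Let 0 < α < 1, a < b, Ψ : ℝ → ℝ strictly increasing and continuously differentiable on [a,b] with Ψ'(t) > 0 for all t ∈ [a,b]. Suppose f = h ∘ Ψ and g = w ∘ Ψ with h, w real-analytic with everywhere-convergent power series, and write f⁽ᵐ⁾(x) := h⁽ᵐ⁾(Ψ(x)). Then for every x ∈ (a,b): (^{RL}D^{α;Ψ}(f·g))(x) = Σ_{m=0}^∞ binom(α, m) f⁽ᵐ⁾(x) (^{RL}D^{α−m;Ψ} g)(x), the series converging. -/

import Mathlib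

open Real

/-- Generalized binomial coefficient `binom(γ, n) = γ(γ-1)⋯(γ-n+1)/n!`. -/
noncomputable def genBinom (γ : ℝ) (n : ℕ) : ℝ :=
  (∏ i ∈ Finset.range n, (γ - (i : ℝ))) / (n.factorial : ℝ)

/-- Ψ-Riemann–Liouville fractional integral of order `α` with base point `a`;
by convention the order-0 integral is the identity. -/
noncomputable def psiI (a : ℝ) (Ψ f : ℝ → ℝ) (α : ℝ) (x : ℝ) : ℝ :=
  if α = 0 then f x
  else (Real.Gamma α)⁻¹ * ∫ t in a..x, deriv Ψ t * (Ψ x - Ψ t) ^ (α - 1) * f t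

/-- Ψ-Riemann–Liouville fractional derivative of order `γ` (for `γ ≤ 0` it is the
fractional integral of order `-γ`, the order-0 case being the identity). -/
noncomputable def psiRLD (a : ℝ) (Ψ f : ℝ → ℝ) (γ : ℝ) (x : ℝ) : ℝ :=
  if γ ≤ 0 then psiI a Ψ f (-γ) x
  else (deriv Ψ x)⁻¹ * deriv (fun y => psiI a Ψ f (1 - γ) y) x

/-- Ψ-Caputo fractional derivative of order `γ` (for `γ ≤ 0` it is the
fractional integral of order `-γ`). -/
noncomputable def psiCD (a : ℝ) (Ψ f : ℝ → ℝ) (γ : ℝ) (x : ℝ) : ℝ :=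
  if γ ≤ 0 then psiI a Ψ f (-γ) x
  else psiI a Ψ (fun t => (deriv Ψ t)⁻¹ * deriv f t) (1 - γ) x

/-- Ψ-Hilfer fractional derivative of order `α` and type `β`. -/
noncomputable def psiHD (a : ℝ) (Ψ f : ℝ → ℝ) (α β : ℝ) (x : ℝ) : ℝ :=
  psiI a Ψ
    (fun y => (deriv Ψ y)⁻¹ * deriv (fun z => psiI a Ψ f ((1 - β) * (1 - α)) z) y)
    (β * (1 - α)) x

/-- Classical Riemann–Liouville fractional integral with base point `a`. -/
noncomputable def rlI (a : ℝ) (α : ℝ) (f : ℝ → ℝ) (x : ℝ) : ℝ :=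
  if α = 0 then f x
  else (Real.Gamma α)⁻¹ * ∫ t in a..x, (x - t) ^ (α - 1) * f t

/-- Classical Riemann–Liouville fractional derivative (fractional integral for `γ ≤ 0`). -/
noncomputable def rlD (a : ℝ) (γ : ℝ) (f : ℝ → ℝ) (x : ℝ) : ℝ :=
  if γ ≤ 0 then rlI a (-γ) f x
  else deriv (fun y => rlI a (1 - γ) f y) x

/-- Classical Caputo fractional derivative (fractional integral for `γ ≤ 0`). -/
noncomputable def capD (a : ℝ) (γ : ℝ) (f : ℝ → ℝ) (x : ℝ) : ℝ :=
  if γ ≤ 0 then rlI a (-γ) f x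
  else rlI a (1 - γ) (deriv f) x

/-- Classical Hilfer fractional derivative of order `α` and type `β`. -/
noncomputable def hilD (a : ℝ) (α β : ℝ) (f : ℝ → ℝ) (x : ℝ) : ℝ :=
  rlI a (β * (1 - α))
    (fun y => deriv (fun z => rlI a ((1 - β) * (1 - α)) f z) y) x

/-- Hadamard fractional integral with base point `a`. -/
noncomputable def hadI (a : ℝ) (α : ℝ) (f : ℝ → ℝ) (x : ℝ) : ℝ :=
  if α = 0 then f x
  else (Real.Gamma α)⁻¹ * ∫ t in a..x, (Real.log x - Real.log t) ^ (α - 1) * f t / t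

/-- Caputo–Hadamard fractional derivative (Hadamard fractional integral for `γ ≤ 0`). -/
noncomputable def chD (a : ℝ) (γ : ℝ) (f : ℝ → ℝ) (x : ℝ) : ℝ :=
  if γ ≤ 0 then hadI a (-γ) f x
  else hadI a (1 - γ) (fun t => t * deriv f t) x

/-- `h` is real-analytic with a power series converging on all of `ℝ`. -/
def EntireReal (h : ℝ → ℝ) : Prop :=
  ∃ p : FormalMultilinearSeries ℝ ℝ ℝ, HasFPowerSeriesOnBall h p 0 ⊤

/-! Substituting `s = Ψ t` reduces everything to the classical operators `J_β = rlI c β` at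
`y = Ψ x`. Write `h s = h y + (s - y) * r s` with `r = dslope h y`. Since
`J_β ((· - y) v) z = (z - y) J_β v z - β J_{β+1} v z`, and `J_{β+1} v` is a primitive of the
continuous function `J_β v`, differentiating at `z = y` gives, with `β = 1 - α`,
`D^α (h w) y = h y * D^α w y + α * J_{1-α} (r w) y`.
The same identity, iterated, evaluates `J_β ((· - y)ⁿ w) y` as a multiple of `J_{β+n} w y`, so
expanding `r` in powers of `s - y` and integrating termwise produces the series. -/

section FractionalCalculus

open MeasureTheory Set Filter Topology
open scoped Nat ENNReal

variable {c d y z α β : ℝ} {u v w h r : ℝ → ℝ}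

lemma intervalIntegrable_sub_rpow (hβ : 0 < β) :
    IntervalIntegrable (fun s => (y - s) ^ (β - 1)) volume c z := by
  simpa using (intervalIntegral.intervalIntegrable_rpow' (a := y - c) (b := y - z)
    (r := β - 1) (by linarith)).comp_sub_left y

lemma intervalIntegrable_sub_rpow_mul (hβ : 0 < β) (hcz : c ≤ z)
    (hv : ContinuousOn v (Icc c z)) :
    IntervalIntegrable (fun s => (y - s) ^ (β - 1) * v s) volume c z :=
  (intervalIntegrable_sub_rpow hβ).mul_continuousOn (by rwa [uIcc_of_le hcz])

lemma integral_sub_rpow (hβ : 0 < β) :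
    ∫ s in c..y, (y - s) ^ (β - 1) = (y - c) ^ β / β := by
  rw [intervalIntegral.integral_comp_sub_left (fun t => t ^ (β - 1)) y, sub_self,
    integral_rpow (Or.inl (by linarith)), sub_add_cancel, Real.zero_rpow hβ.ne', sub_zero]

lemma rlI_of_pos (hβ : 0 < β) (v : ℝ → ℝ) :
    rlI c β v y = (Gamma β)⁻¹ * ∫ s in c..y, (y - s) ^ (β - 1) * v s :=
  if_neg hβ.ne'

lemma rlI_zero (v : ℝ → ℝ) : rlI c 0 v y = v y :=
  if_pos rfl

lemma rlI_const_mul (k : ℝ) (v : ℝ → ℝ) :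
    rlI c β (fun s => k * v s) y = k * rlI c β v y := by
  unfold rlI
  split_ifs
  · rfl
  · simp only [mul_left_comm _ k, intervalIntegral.integral_const_mul]

lemma rlI_add (hβ : 0 < β) (hcy : c ≤ y) (hu : ContinuousOn u (Icc c y))
    (hv : ContinuousOn v (Icc c y)) :
    rlI c β (fun s => u s + v s) y = rlI c β u y + rlI c β v y := by
  simp only [rlI_of_pos hβ, mul_add]
  rw [intervalIntegral.integral_add (intervalIntegrable_sub_rpow_mul hβ hcy hu)
    (intervalIntegrable_sub_rpow_mul hβ hcy hv), mul_add]

lemma rlI_const (hβ : 0 < β) (k : ℝ) :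
    rlI c β (fun _ => k) y = k * (Gamma β)⁻¹ * ((y - c) ^ β / β) := by
  rw [rlI_of_pos hβ, intervalIntegral.integral_mul_const, integral_sub_rpow hβ]
  ring

lemma rlI_sub_mul (hβ : 0 ≤ β) (hcy : c ≤ y) (z : ℝ) (hv : ContinuousOn v (Icc c y)) :
    rlI c β (fun s => (s - z) * v s) y = (y - z) * rlI c β v y - β * rlI c (β + 1) v y := by
  obtain rfl | hβ := hβ.eq_or_lt
  · simp only [rlI_zero, zero_mul, sub_zero]
  have hkernel : ∀ s ∈ uIcc c y, (y - s) ^ (β - 1) * ((s - z) * v s) =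
      (y - z) * ((y - s) ^ (β - 1) * v s) - (y - s) ^ (β + 1 - 1) * v s := by
    intro s hs
    rw [uIcc_of_le hcy] at hs
    have hpow : (y - s) ^ (β + 1 - 1) = (y - s) ^ (β - 1) * (y - s) := by
      rw [← Real.rpow_add_one' (sub_nonneg.2 hs.2) (by linarith)]
      ring_nf
    rw [hpow]
    ring
  rw [rlI_of_pos hβ, rlI_of_pos hβ, rlI_of_pos (by linarith : 0 < β + 1),
    intervalIntegral.integral_congr hkernel, intervalIntegral.integral_sub
      ((intervalIntegrable_sub_rpow_mul hβ hcy hv).const_mul _)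
      (intervalIntegrable_sub_rpow_mul (by linarith) hcy hv),
    intervalIntegral.integral_const_mul, Real.Gamma_add_one hβ.ne']
  field_simp

-- With the endpoint fixed at `1`, continuity in `y` follows by dominated convergence.
lemma rlI_eq_scaled (hβ : 0 < β) (hcy : c ≤ y) (v : ℝ → ℝ) :
    rlI c β v y = (Gamma β)⁻¹ * ((y - c) ^ β *
      ∫ σ in (0 : ℝ)..1, (1 - σ) ^ (β - 1) * v (c + (y - c) * σ)) := by
  have hkernel : ∀ σ ∈ uIcc (0 : ℝ) 1,
      (y - (c + (y - c) * σ)) ^ (β - 1) * v (c + (y - c) * σ) =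
        (y - c) ^ (β - 1) * ((1 - σ) ^ (β - 1) * v (c + (y - c) * σ)) := by
    intro σ hσ
    rw [uIcc_of_le zero_le_one] at hσ
    rw [show y - (c + (y - c) * σ) = (y - c) * (1 - σ) by ring,
      Real.mul_rpow (sub_nonneg.2 hcy) (sub_nonneg.2 hσ.2), mul_assoc]
  have hsubst := intervalIntegral.smul_integral_comp_add_mul (a := 0) (b := 1)
    (fun s => (y - s) ^ (β - 1) * v s) (y - c) c
  rw [intervalIntegral.integral_congr hkernel, intervalIntegral.integral_const_mul, smul_eq_mul,
    ← mul_assoc, mul_comm (y - c), ← Real.rpow_add_one' (sub_nonneg.2 hcy) (by linarith),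
    sub_add_cancel, mul_zero, mul_one, add_zero, add_sub_cancel] at hsubst
  rw [rlI_of_pos hβ, hsubst]

lemma continuousOn_rlI (hβ : 0 < β) (hv : ContinuousOn v (Icc c d)) :
    ContinuousOn (rlI c β v) (Icc c d) := by
  obtain ⟨C, hC⟩ := isCompact_Icc.exists_bound_of_continuousOn hv
  have hmaps : ∀ t ∈ Icc c d, ∀ σ ∈ Icc (0 : ℝ) 1, c + (t - c) * σ ∈ Icc c d := by
    intro t ht σ hσ
    constructor <;> nlinarith [ht.1, ht.2, hσ.1, hσ.2]
  have hscaled : ContinuousOn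
      (fun t => ∫ σ in (0 : ℝ)..1, (1 - σ) ^ (β - 1) * v (c + (t - c) * σ)) (Icc c d) := by
    intro t ht
    refine intervalIntegral.continuousWithinAt_of_dominated_interval
      (bound := fun σ => (1 - σ) ^ (β - 1) * C) ?_ ?_ ?_ ?_
    · filter_upwards [self_mem_nhdsWithin] with τ hτ
      exact (intervalIntegrable_sub_rpow_mul hβ zero_le_one
        (hv.comp (by fun_prop) (hmaps τ hτ))).def'.aestronglyMeasurable
    · filter_upwards [self_mem_nhdsWithin] with τ hτ
      refine Eventually.of_forall fun σ hσ => ?_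
      rw [uIoc_of_le zero_le_one] at hσ
      have hnonneg : 0 ≤ (1 - σ) ^ (β - 1) := Real.rpow_nonneg (sub_nonneg.2 hσ.2) _
      rw [norm_mul, Real.norm_of_nonneg hnonneg]
      gcongr
      exact hC _ (hmaps τ hτ σ (Ioc_subset_Icc_self hσ))
    · exact (intervalIntegrable_sub_rpow hβ).mul_const C
    · refine Eventually.of_forall fun σ hσ => ?_
      rw [uIoc_of_le zero_le_one] at hσ
      have hσI := Ioc_subset_Icc_self hσ
      have hcomp : ContinuousOn (fun τ => v (c + (τ - c) * σ)) (Icc c d) :=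
        hv.comp (by fun_prop) fun τ hτ => hmaps τ hτ σ hσI
      exact continuousWithinAt_const.mul (hcomp t ht)
  have hpow : Continuous fun t => (t - c) ^ β :=
    (continuous_id.sub continuous_const).rpow_const fun _ => Or.inr hβ.le
  exact (continuousOn_const.mul (hpow.continuousOn.mul hscaled)).congr
    fun t ht => rlI_eq_scaled hβ ht.1 v

lemma integrableOn_sub_rpow_mul_prod (hβ : 0 < β) (hcy : c ≤ y)
    (hv : ContinuousOn v (Icc c y)) :
    IntegrableOn (Function.uncurry fun t s =>
      indicator (Iic t) (fun s => (t - s) ^ (β - 1) * v s) s) (uIoc c y ×ˢ uIoc c y) := by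
  set V : ℝ → ℝ := (Icc c y).indicator v
  set K : ℝ → ℝ := (Icc 0 (y - c)).indicator fun t => t ^ (β - 1)
  have hV : Integrable V := hv.integrableOn_Icc.integrable_indicator measurableSet_Icc
  have hK : Integrable K := by
    rw [integrable_indicator_iff measurableSet_Icc,
      ← intervalIntegrable_iff_integrableOn_Icc_of_le (sub_nonneg.2 hcy)]
    exact intervalIntegral.intervalIntegrable_rpow' (by linarith)
  refine (hV.convolution_integrand (.mul ℝ ℝ) hK).integrableOn.congr_fun (fun p hp => ?_)
    (measurableSet_uIoc.prod measurableSet_uIoc)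
  simp only [uIoc_of_le hcy, mem_prod, mem_Ioc] at hp
  have hVp : V p.2 = v p.2 := indicator_of_mem (mem_Icc.2 ⟨hp.2.1.le, hp.2.2⟩) v
  simp only [ContinuousLinearMap.mul_apply', hVp, Function.uncurry, K, indicator, mem_Icc,
    mem_Iic, sub_nonneg]
  by_cases hle : p.2 ≤ p.1
  · rw [if_pos ⟨hle, by linarith⟩, if_pos hle, mul_comm]
  · rw [if_neg fun hmem => hle hmem.1, if_neg hle, mul_zero]

lemma integral_indicator_sub_rpow (hβ : 0 < β) (hz : z ∈ Ioc c y) :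
    ∫ t in c..y, indicator (Iic t) (fun s => (t - s) ^ (β - 1) * v s) z =
      (y - z) ^ β / β * v z := by
  have hindicator : ∀ t, indicator (Iic t) (fun s => (t - s) ^ (β - 1) * v s) z =
      (Ici z).indicator (fun t => (t - z) ^ (β - 1)) t * v z := by
    intro t
    by_cases hle : z ≤ t <;> simp [hle]
  have hinter : Ioc c y ∩ Ici z = Icc z y := by
    ext t
    simp only [mem_inter_iff, mem_Ioc, mem_Ici, mem_Icc]
    exact ⟨fun ht => ⟨ht.2, ht.1.2⟩, fun ht => ⟨⟨hz.1.trans_le ht.1, ht.2⟩, ht.1⟩⟩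
  simp only [hindicator]
  rw [intervalIntegral.integral_mul_const, intervalIntegral.integral_of_le (hz.1.le.trans hz.2),
    setIntegral_indicator measurableSet_Ici, hinter, integral_Icc_eq_integral_Ioc,
    ← intervalIntegral.integral_of_le hz.2,
    intervalIntegral.integral_comp_sub_right (fun t => t ^ (β - 1)) z, sub_self,
    integral_rpow (Or.inl (by linarith)), sub_add_cancel, Real.zero_rpow hβ.ne', sub_zero]

lemma integral_rlI (hβ : 0 < β) (hcy : c ≤ y) (hv : ContinuousOn v (Icc c y)) :
    ∫ t in c..y, rlI c β v t = rlI c (β + 1) v y := by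
  have hinner : ∀ t ∈ uIcc c y, ∫ s in c..t, (t - s) ^ (β - 1) * v s =
      ∫ s in c..y, indicator (Iic t) (fun s => (t - s) ^ (β - 1) * v s) s := by
    intro t ht
    rw [uIcc_of_le hcy] at ht
    exact (intervalIntegral.integral_indicator ht).symm
  have houter : ∀ s ∈ uIoc c y,
      ∫ t in c..y, indicator (Iic t) (fun s => (t - s) ^ (β - 1) * v s) s =
        (y - s) ^ β / β * v s := by
    intro s hs
    rw [uIoc_of_le hcy] at hs
    exact integral_indicator_sub_rpow hβ hs
  calc ∫ t in c..y, rlI c β v t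
      = (Gamma β)⁻¹ * ∫ t in c..y, ∫ s in c..t, (t - s) ^ (β - 1) * v s := by
        simp only [rlI_of_pos hβ, intervalIntegral.integral_const_mul]
    _ = (Gamma β)⁻¹ * ∫ s in c..y, (y - s) ^ β / β * v s := by
        rw [intervalIntegral.integral_congr hinner, intervalIntegral_intervalIntegral_swap
          (integrableOn_sub_rpow_mul_prod hβ hcy hv),
          intervalIntegral.integral_congr_ae (Eventually.of_forall houter)]
    _ = rlI c (β + 1) v y := by
        simp only [rlI_of_pos (by linarith : 0 < β + 1), add_sub_cancel_right,
          div_mul_eq_mul_div, intervalIntegral.integral_div, Real.Gamma_add_one hβ.ne']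
        field_simp

lemma hasDerivAt_rlI_add_one (hβ : 0 < β) (hy : y ∈ Ioo c d) (hv : ContinuousOn v (Icc c d)) :
    HasDerivAt (rlI c (β + 1) v) (rlI c β v y) y := by
  have hcont := continuousOn_rlI hβ hv
  have hprimitive : HasDerivAt (fun z => ∫ t in c..z, rlI c β v t) (rlI c β v y) y := by
    refine intervalIntegral.integral_hasDerivAt_right ?_ ?_
      (hcont.continuousAt (Icc_mem_nhds hy.1 hy.2))
    · exact (hcont.mono (Icc_subset_Icc_right hy.2.le)).intervalIntegrable_of_Icc hy.1.le
    · exact (hcont.mono Ioo_subset_Icc_self).stronglyMeasurableAtFilter isOpen_Ioo y hy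
  refine hprimitive.congr_of_eventuallyEq ?_
  filter_upwards [Ioo_mem_nhds hy.1 hy.2] with z hz
  exact (integral_rlI hβ hz.1.le (hv.mono (Icc_subset_Icc_right hz.2.le))).symm

lemma hasDerivAt_sub_mul_of_continuousAt (hu : ContinuousAt u y) :
    HasDerivAt (fun z => (z - y) * u z) (u y) y := by
  rw [hasDerivAt_iff_tendsto_slope]
  refine (hu.tendsto.mono_left nhdsWithin_le_nhds).congr' ?_
  filter_upwards [self_mem_nhdsWithin] with z hz
  exact (slope_sub_smul u (Ne.symm hz)).symm

lemma hasDerivAt_rlI_sub_mul (hβ : 0 < β) (hy : y ∈ Ioo c d) (hv : ContinuousOn v (Icc c d)) :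
    HasDerivAt (rlI c β fun s => (s - y) * v s) ((1 - β) * rlI c β v y) y := by
  have hcont : ContinuousAt (rlI c β v) y :=
    (continuousOn_rlI hβ hv).continuousAt (Icc_mem_nhds hy.1 hy.2)
  have hderiv := (hasDerivAt_sub_mul_of_continuousAt hcont).sub
    ((hasDerivAt_rlI_add_one hβ hy hv).const_mul β)
  rw [← one_sub_mul] at hderiv
  refine hderiv.congr_of_eventuallyEq ?_
  filter_upwards [Ioo_mem_nhds hy.1 hy.2] with z hz
  exact rlI_sub_mul hβ.le hz.1.le y (hv.mono (Icc_subset_Icc_right hz.2.le))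

lemma hasDerivAt_rlI_mul (hβ : 0 < β) (hy : y ∈ Ioo c d) (hh : ContinuousOn h (Icc c d))
    (hhy : DifferentiableAt ℝ h y) (hw : ContinuousOn w (Icc c d))
    (hwy : DifferentiableAt ℝ (rlI c β w) y) :
    HasDerivAt (rlI c β fun s => h s * w s)
      (h y * deriv (rlI c β w) y + (1 - β) * rlI c β (fun s => dslope h y s * w s) y) y := by
  have hslope : ContinuousOn (fun s => dslope h y s * w s) (Icc c d) :=
    ((continuousOn_dslope (Icc_mem_nhds hy.1 hy.2)).2 ⟨hh, hhy⟩).mul hw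
  have hlinear : ContinuousOn (fun s => (s - y) * (dslope h y s * w s)) (Icc c d) :=
    (continuousOn_id.sub continuousOn_const).mul hslope
  have hsplit : (fun s => h s * w s) =
      fun s => h y * w s + (s - y) * (dslope h y s * w s) := by
    ext s
    rw [← mul_assoc (s - y), ← smul_eq_mul (s - y), sub_smul_dslope]
    ring
  refine ((hwy.hasDerivAt.const_mul (h y)).add
    (hasDerivAt_rlI_sub_mul hβ hy hslope)).congr_of_eventuallyEq ?_
  filter_upwards [Ioo_mem_nhds hy.1 hy.2] with z hz
  have hsub : Icc c z ⊆ Icc c d := Icc_subset_Icc_right hz.2.le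
  rw [hsplit, rlI_add hβ hz.1.le ((hw.mono hsub).const_mul _)
    (hlinear.mono hsub), rlI_const_mul]
  rfl

lemma differentiableAt_rlI (hβ : 0 < β) (hy : y ∈ Ioo c d) (hw : ContinuousOn w (Icc c d))
    (hwy : DifferentiableAt ℝ w y) : DifferentiableAt ℝ (rlI c β w) y := by
  have hone : DifferentiableAt ℝ (rlI c β fun _ => 1) y := by
    rw [show (rlI c β fun _ => 1) = _ from funext fun _ => rlI_const hβ 1]
    exact (((differentiableAt_id.sub_const c).rpow_const
      (Or.inl (sub_pos.2 hy.1).ne')).div_const β).const_mul _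
  simpa only [mul_one] using
    (hasDerivAt_rlI_mul hβ hy hw hwy continuousOn_const hone).differentiableAt

lemma genBinom_zero (γ : ℝ) : genBinom γ 0 = 1 := by
  simp [genBinom]

lemma genBinom_succ_mul_factorial (γ : ℝ) (n : ℕ) :
    genBinom γ (n + 1) * (n + 1)! = γ * (genBinom (γ - 1) n * n !) := by
  have hshift : ∀ i : ℕ, γ - ((i + 1 : ℕ) : ℝ) = γ - 1 - i := fun i => by push_cast; ring
  unfold genBinom
  rw [div_mul_cancel₀ _ (Nat.cast_ne_zero.2 (n + 1).factorial_ne_zero),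
    div_mul_cancel₀ _ (Nat.cast_ne_zero.2 n.factorial_ne_zero), Finset.prod_range_succ']
  simp only [hshift, Nat.cast_zero, sub_zero, mul_comm]

lemma rlI_sub_pow_mul (hβ : 0 ≤ β) (hcy : c ≤ y) (hv : ContinuousOn v (Icc c y)) (n : ℕ) :
    rlI c β (fun s => (s - y) ^ n * v s) y = genBinom (-β) n * n ! * rlI c (β + n) v y := by
  induction n generalizing β with
  | zero => simp [genBinom_zero]
  | succ n ih =>
    have hpow : ContinuousOn (fun s => (s - y) ^ n * v s) (Icc c y) := by fun_prop
    calc rlI c β (fun s => (s - y) ^ (n + 1) * v s) y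
        = rlI c β (fun s => (s - y) * ((s - y) ^ n * v s)) y := by
          simp only [pow_succ', mul_assoc]
      _ = -β * rlI c (β + 1) (fun s => (s - y) ^ n * v s) y := by
          rw [rlI_sub_mul hβ hcy y hpow]
          ring
      _ = -β * (genBinom (-β - 1) n * n !) * rlI c (β + 1 + n) v y := by
          rw [ih (by linarith), neg_add', mul_assoc (-β)]
      _ = genBinom (-β) (n + 1) * (n + 1)! * rlI c (β + (n + 1 : ℕ)) v y := by
          rw [genBinom_succ_mul_factorial, Nat.cast_succ, add_assoc, add_comm (1 : ℝ)]

lemma hasSum_rlI_mul_of_hasSum_pow (hβ : 0 < β) (hcy : c ≤ y) {a : ℕ → ℝ}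
    (hr : ∀ s ∈ Icc c y, HasSum (fun n => a n * (s - y) ^ n) (r s))
    (hw : ContinuousOn w (Icc c y)) :
    HasSum (fun n => rlI c β (fun s => a n * ((s - y) ^ n * w s)) y)
      (rlI c β (fun s => r s * w s) y) := by
  set F : ℕ → ℝ → ℝ := fun n s => (y - s) ^ (β - 1) * (a n * ((s - y) ^ n * w s))
  set bound : ℕ → ℝ → ℝ := fun n s =>
    |a n| * (y - c) ^ n * ((y - s) ^ (β - 1) * |w s|)
  have hsummable : Summable fun n => |a n| * (y - c) ^ n := by
    simpa [abs_mul, abs_sub_comm c y, abs_of_nonneg (sub_nonneg.2 hcy)] using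
      (hr c (left_mem_Icc.2 hcy)).summable.abs
  have hF_meas : ∀ n, AEStronglyMeasurable (F n) (volume.restrict (uIoc c y)) := fun n =>
    (intervalIntegrable_sub_rpow_mul (v := fun s => a n * ((s - y) ^ n * w s)) hβ hcy
      (by fun_prop)).def'.aestronglyMeasurable
  have hF_le : ∀ n, ∀ s ∈ uIoc c y, ‖F n s‖ ≤ bound n s := by
    intro n s hs
    rw [uIoc_of_le hcy] at hs
    have hys : 0 ≤ y - s := sub_nonneg.2 hs.2
    calc ‖F n s‖ = |a n| * (y - s) ^ n * ((y - s) ^ (β - 1) * |w s|) := by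
          rw [Real.norm_eq_abs, abs_mul, abs_mul, abs_mul, abs_pow, abs_sub_comm s y,
            abs_of_nonneg hys, abs_of_nonneg (Real.rpow_nonneg hys _)]
          ring
      _ ≤ |a n| * (y - c) ^ n * ((y - s) ^ (β - 1) * |w s|) := by
          gcongr
          exact hs.1.le
  have hbound_int : IntervalIntegrable (fun s => ∑' n, bound n s) volume c y := by
    simp only [bound, tsum_mul_right]
    exact (intervalIntegrable_sub_rpow_mul hβ hcy hw.abs).const_mul _
  have hF_sum : ∀ s ∈ uIoc c y,
      HasSum (fun n => F n s) ((y - s) ^ (β - 1) * (r s * w s)) := by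
    intro s hs
    rw [uIoc_of_le hcy] at hs
    simpa only [F, mul_assoc] using
      ((hr s (Ioc_subset_Icc_self hs)).mul_right (w s)).mul_left ((y - s) ^ (β - 1))
  simp only [rlI_of_pos hβ]
  exact (intervalIntegral.hasSum_integral_of_dominated_convergence bound hF_meas
    (fun n => Eventually.of_forall (hF_le n))
    (Eventually.of_forall fun s _ => hsummable.mul_right _) hbound_int
    (Eventually.of_forall hF_sum)).mul_left _

lemma hasSum_genBinom_mul_rlI (hβ : 0 ≤ β) (hcy : c ≤ y) {a : ℕ → ℝ}
    (hr : ∀ s ∈ Icc c y, HasSum (fun n => a n * (s - y) ^ n) (r s))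
    (hw : ContinuousOn w (Icc c y)) :
    HasSum (fun n => a n * (genBinom (-β) n * n ! * rlI c (β + n) w y))
      (rlI c β (fun s => r s * w s) y) := by
  simp only [← rlI_sub_pow_mul hβ hcy hw, ← rlI_const_mul]
  obtain rfl | hβ := hβ.eq_or_lt
  · simpa only [rlI_zero, mul_assoc] using (hr y (right_mem_Icc.2 hcy)).mul_right (w y)
  · exact hasSum_rlI_mul_of_hasSum_pow hβ hcy hr hw

lemma hasSum_taylor_of_hasFPowerSeriesOnBall {p : FormalMultilinearSeries ℝ ℝ ℝ} {R : ℝ≥0∞}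
    (hh : HasFPowerSeriesOnBall h p y R) (hz : z ∈ Metric.eball y R) :
    HasSum (fun n => iteratedDeriv n h y / n ! * (z - y) ^ n) (h z) := by
  have hz' : z - y ∈ Metric.eball 0 R := by
    rwa [Metric.mem_eball, edist_zero_right, ← edist_eq_enorm_sub]
  have hsum := hh.hasSum_iteratedFDeriv hz'
  rw [add_sub_cancel] at hsum
  refine hsum.congr_fun fun n => ?_
  have hsmul := (iteratedFDeriv ℝ n h y).map_smul_univ (fun _ => z - y) fun _ => 1
  simp only [smul_eq_mul, mul_one, Finset.prod_const, Finset.card_fin] at hsmul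
  rw [hsmul, iteratedDeriv_eq_iteratedFDeriv, smul_eq_mul]
  ring

lemma hasSum_dslope {a : ℕ → ℝ} (hsum : HasSum (fun n => a n * (z - y) ^ n) (h z))
    (ha₀ : a 0 = h y) (ha₁ : a 1 = deriv h y) :
    HasSum (fun n => a (n + 1) * (z - y) ^ n) (dslope h y z) := by
  obtain rfl | hzy := eq_or_ne z y
  · rw [dslope_same, ← ha₁]
    simpa using hasSum_single (f := fun n => a (n + 1) * (z - z) ^ n) 0
      fun n hn => by simp [hn]
  · have hzy' : z - y ≠ 0 := sub_ne_zero.2 hzy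
    have htail := ((hasSum_nat_add_iff' 1).2 hsum).div_const (z - y)
    rw [dslope_of_ne h hzy, slope_def_field]
    simpa [ha₀, pow_succ, ← mul_assoc, mul_div_cancel_right₀ _ hzy'] using htail

lemma rlD_of_nonpos {γ : ℝ} (hγ : γ ≤ 0) (v : ℝ → ℝ) : rlD c γ v y = rlI c (-γ) v y :=
  if_pos hγ

lemma rlD_of_pos {γ : ℝ} (hγ : 0 < γ) (v : ℝ → ℝ) : rlD c γ v y = deriv (rlI c (1 - γ) v) y :=
  if_neg hγ.not_ge

theorem hasSum_rlD_mul_of_nonpos (hα : α ≤ 0) (hcy : c ≤ y)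
    (hh : ∀ s ∈ Icc c y, HasSum (fun n => iteratedDeriv n h y / n ! * (s - y) ^ n) (h s))
    (hw : ContinuousOn w (Icc c y)) :
    HasSum (fun m : ℕ => genBinom α m * iteratedDeriv m h y * rlD c (α - m) w y)
      (rlD c α (fun s => h s * w s) y) := by
  rw [rlD_of_nonpos hα]
  refine (hasSum_genBinom_mul_rlI (neg_nonneg.2 hα) hcy hh hw).congr_fun fun m => ?_
  have hm : α - m ≤ 0 := by linarith [m.cast_nonneg (α := ℝ)]
  have hfac : (m ! : ℝ) ≠ 0 := Nat.cast_ne_zero.2 m.factorial_ne_zero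
  rw [rlD_of_nonpos hm, neg_neg, neg_sub, neg_add_eq_sub]
  field_simp

theorem hasSum_rlD_mul_of_pos (hα₀ : 0 < α) (hα₁ : α < 1) (hy : y ∈ Ioo c d)
    (hhc : ContinuousOn h (Icc c d)) (hhy : DifferentiableAt ℝ h y)
    (hh : ∀ s ∈ Icc c y, HasSum (fun n => iteratedDeriv n h y / n ! * (s - y) ^ n) (h s))
    (hw : ContinuousOn w (Icc c d)) (hwy : DifferentiableAt ℝ (rlI c (1 - α) w) y) :
    HasSum (fun m : ℕ => genBinom α m * iteratedDeriv m h y * rlD c (α - m) w y)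
      (rlD c α (fun s => h s * w s) y) := by
  have hslope : ∀ s ∈ Icc c y, HasSum
      (fun n => iteratedDeriv (n + 1) h y / (n + 1)! * (s - y) ^ n) (dslope h y s) :=
    fun s hs => hasSum_dslope (hh s hs) (by simp) (by simp)
  have hproduct : rlD c α (fun s => h s * w s) y =
      h y * rlD c α w y + α * rlI c (1 - α) (fun s => dslope h y s * w s) y := by
    rw [rlD_of_pos hα₀, rlD_of_pos hα₀,
      (hasDerivAt_rlI_mul (sub_pos.2 hα₁) hy hhc hhy hw hwy).deriv, sub_sub_cancel]
  have hterm : ∀ n : ℕ, genBinom α (n + 1) * iteratedDeriv (n + 1) h y *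
      rlD c (α - (n + 1 : ℕ)) w y = α * (iteratedDeriv (n + 1) h y / (n + 1)! *
        (genBinom (-(1 - α)) n * n ! * rlI c (1 - α + n) w y)) := by
    intro n
    have hn : α - (n + 1 : ℕ) ≤ 0 := by push_cast; linarith [n.cast_nonneg (α := ℝ)]
    have hfac : ((n + 1)! : ℝ) ≠ 0 := Nat.cast_ne_zero.2 (n + 1).factorial_ne_zero
    have hbinom := genBinom_succ_mul_factorial α n
    rw [rlD_of_nonpos hn, show -(α - (n + 1 : ℕ)) = 1 - α + n by push_cast; ring, neg_sub]
    field_simp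
    linear_combination iteratedDeriv (n + 1) h y * rlI c (1 - α + n) w y * hbinom
  rw [← hasSum_nat_add_iff' 1, Finset.sum_range_one, hproduct]
  simpa only [hterm, genBinom_zero, iteratedDeriv_zero, one_mul, Nat.cast_zero, sub_zero,
    add_sub_cancel_left] using (hasSum_genBinom_mul_rlI (sub_nonneg.2 hα₁.le)
      hy.1.le hslope (hw.mono (Icc_subset_Icc_right hy.2.le))).mul_left α

lemma exists_Icc_subset_eball {R : ℝ≥0∞} (hy : y ∈ Ioo c d) (hR : ENNReal.ofReal (y - c) < R) :
    ∃ e, y < e ∧ e ≤ d ∧ Icc c e ⊆ Metric.eball y R := by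
  refine ⟨min d (2 * y - c), lt_min hy.2 (by linarith [hy.1]), min_le_left _ _, fun s hs => ?_⟩
  have hsy : |s - y| ≤ y - c :=
    abs_le.2 ⟨by linarith [hs.1], by linarith [hs.2.trans (min_le_right _ _)]⟩
  rw [Metric.mem_eball, edist_dist, Real.dist_eq]
  exact (ENNReal.ofReal_le_ofReal hsy).trans_lt hR

lemma differentiableAt_rlI_mul {p : FormalMultilinearSeries ℝ ℝ ℝ} {R : ℝ≥0∞} (hβ : 0 < β)
    (hy : y ∈ Ioo c d) (hh : HasFPowerSeriesOnBall h p y R) (hR : ENNReal.ofReal (y - c) < R)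
    (hw : ContinuousOn w (Icc c d)) (hwy : DifferentiableAt ℝ (rlI c β w) y) :
    DifferentiableAt ℝ (rlI c β fun s => h s * w s) y := by
  obtain ⟨e, hye, hed, hball⟩ := exists_Icc_subset_eball hy hR
  exact (hasDerivAt_rlI_mul hβ ⟨hy.1, hye⟩ (hh.continuousOn.mono hball)
    hh.hasFPowerSeriesAt.differentiableAt (hw.mono (Icc_subset_Icc_right hed))
    hwy).differentiableAt

theorem hasSum_rlD_mul {p : FormalMultilinearSeries ℝ ℝ ℝ} {R : ℝ≥0∞} (hα : α < 1)
    (hy : y ∈ Ioo c d) (hh : HasFPowerSeriesOnBall h p y R) (hR : ENNReal.ofReal (y - c) < R)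
    (hw : ContinuousOn w (Icc c d))
    (hwy : 0 < α → DifferentiableAt ℝ (rlI c (1 - α) w) y) :
    HasSum (fun m : ℕ => genBinom α m * iteratedDeriv m h y * rlD c (α - m) w y)
      (rlD c α (fun s => h s * w s) y) := by
  obtain ⟨e, hye, hed, hball⟩ := exists_Icc_subset_eball hy hR
  have htaylor : ∀ s ∈ Icc c y, HasSum (fun n => iteratedDeriv n h y / n ! * (s - y) ^ n) (h s) :=
    fun s hs => hasSum_taylor_of_hasFPowerSeriesOnBall hh
      (hball (Icc_subset_Icc_right hye.le hs))
  obtain hα₀ | hα₀ := le_or_gt α 0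
  · exact hasSum_rlD_mul_of_nonpos hα₀ hy.1.le htaylor (hw.mono (Icc_subset_Icc_right hy.2.le))
  · exact hasSum_rlD_mul_of_pos hα₀ hα ⟨hy.1, hye⟩ (hh.continuousOn.mono hball)
      hh.hasFPowerSeriesAt.differentiableAt htaylor (hw.mono (Icc_subset_Icc_right hed)) (hwy hα₀)

lemma strictMonoOn_Icc_of_deriv_pos {a b : ℝ} {Ψ : ℝ → ℝ} (hΨ : ∀ t ∈ Icc a b, 0 < deriv Ψ t) :
    StrictMonoOn Ψ (Icc a b) :=
  strictMonoOn_of_deriv_pos (convex_Icc a b)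
    (fun t ht => (differentiableAt_of_deriv_ne_zero (hΨ t ht).ne').continuousAt.continuousWithinAt)
    fun t ht => hΨ t (interior_subset ht)

lemma psiI_comp {a : ℝ} {Ψ : ℝ → ℝ} {x : ℝ} (hax : a ≤ x) (hΨ : ∀ t ∈ Icc a x, 0 < deriv Ψ t)
    (u : ℝ → ℝ) (β : ℝ) :
    psiI a Ψ (fun t => u (Ψ t)) β x = rlI (Ψ a) β u (Ψ x) := by
  have hdiff : ∀ t ∈ Icc a x, DifferentiableAt ℝ Ψ t := fun t ht =>
    differentiableAt_of_deriv_ne_zero (hΨ t ht).ne'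
  have hcont : ContinuousOn Ψ (Icc a x) := fun t ht => (hdiff t ht).continuousAt.continuousWithinAt
  have hmono : MonotoneOn Ψ (Icc a x) := (strictMonoOn_Icc_of_deriv_pos hΨ).monotoneOn
  have hsubst := integral_Icc_deriv_smul_of_deriv_nonneg
    (g := fun s => (Ψ x - s) ^ (β - 1) * u s) hcont
    (fun t ht => (hdiff t (Ioo_subset_Icc_self ht)).hasDerivAt)
    (fun t ht => (hΨ t (Ioo_subset_Icc_self ht)).le) hax
  unfold psiI rlI
  rw [intervalIntegral.integral_of_le hax, intervalIntegral.integral_of_le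
    (hmono (left_mem_Icc.2 hax) (right_mem_Icc.2 hax) hax),
    ← integral_Icc_eq_integral_Ioc, ← integral_Icc_eq_integral_Ioc, ← hsubst]
  simp only [smul_eq_mul, mul_assoc]

lemma psiRLD_comp {a b γ : ℝ} {Ψ : ℝ → ℝ} {x : ℝ} (hΨ : ∀ t ∈ Icc a b, 0 < deriv Ψ t)
    (hx : x ∈ Ioo a b) (hu : 0 < γ → DifferentiableAt ℝ (rlI (Ψ a) (1 - γ) u) (Ψ x)) :
    psiRLD a Ψ (fun t => u (Ψ t)) γ x = rlD (Ψ a) γ u (Ψ x) := by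
  have hpsiI : ∀ z ∈ Ioo a b, ∀ β, psiI a Ψ (fun t => u (Ψ t)) β z = rlI (Ψ a) β u (Ψ z) :=
    fun z hz => psiI_comp hz.1.le (fun t ht => hΨ t (Icc_subset_Icc_right hz.2.le ht)) u
  unfold psiRLD rlD
  split_ifs with hγ
  · exact hpsiI x hx _
  · have hpos : 0 < deriv Ψ x := hΨ x (Ioo_subset_Icc_self hx)
    have hchain := (hu (not_le.1 hγ)).hasDerivAt.comp x
      (differentiableAt_of_deriv_ne_zero hpos.ne').hasDerivAt
    have hevent : (fun z => psiI a Ψ (fun t => u (Ψ t)) (1 - γ) z) =ᶠ[𝓝 x]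
        rlI (Ψ a) (1 - γ) u ∘ Ψ := by
      filter_upwards [Ioo_mem_nhds hx.1 hx.2] with z hz using hpsiI z hz _
    rw [hevent.deriv_eq, hchain.deriv, mul_comm, mul_inv_cancel_right₀ hpos.ne']

theorem leibniz_psi_RL_general {a b : ℝ} {Ψ : ℝ → ℝ} {x : ℝ} {p : FormalMultilinearSeries ℝ ℝ ℝ}
    {R : ℝ≥0∞} (hα : α < 1) (hΨ : ∀ t ∈ Icc a b, 0 < deriv Ψ t) (hx : x ∈ Ioo a b)
    (hh : HasFPowerSeriesOnBall h p (Ψ x) R) (hR : ENNReal.ofReal (Ψ x - Ψ a) < R)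
    (hw : ContinuousOn w (Icc (Ψ a) (Ψ b)))
    (hwx : 0 < α → DifferentiableAt ℝ (rlI (Ψ a) (1 - α) w) (Ψ x)) :
    HasSum
      (fun m : ℕ =>
        genBinom α m * iteratedDeriv m h (Ψ x) * psiRLD a Ψ (fun t => w (Ψ t)) (α - m) x)
      (psiRLD a Ψ (fun t => h (Ψ t) * w (Ψ t)) α x) := by
  have hΨx : Ψ x ∈ Ioo (Ψ a) (Ψ b) := (strictMonoOn_Icc_of_deriv_pos hΨ).mapsTo_Ioo hx
  have hproduct : psiRLD a Ψ (fun t => h (Ψ t) * w (Ψ t)) α x =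
      rlD (Ψ a) α (fun s => h s * w s) (Ψ x) :=
    psiRLD_comp (u := fun s => h s * w s) hΨ hx fun hα₀ =>
      differentiableAt_rlI_mul (sub_pos.2 hα) hΨx hh hR hw (hwx hα₀)
  have hfactor : ∀ m : ℕ,
      psiRLD a Ψ (fun t => w (Ψ t)) (α - m) x = rlD (Ψ a) (α - m) w (Ψ x) := by
    refine fun m => psiRLD_comp hΨ hx fun hm => ?_
    obtain rfl : m = 0 := Nat.cast_lt_one.1 (show (m : ℝ) < 1 by linarith)
    simpa using hwx (by simpa using hm)
  simpa only [hproduct, hfactor] using hasSum_rlD_mul hα hΨx hh hR hw hwx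

end FractionalCalculus

lemma EntireReal.hasFPowerSeriesOnBall {h : ℝ → ℝ} (hh : EntireReal h) (y : ℝ) :
    ∃ p : FormalMultilinearSeries ℝ ℝ ℝ, HasFPowerSeriesOnBall h p y ⊤ := by
  obtain ⟨p, hp⟩ := hh
  exact ⟨p.changeOrigin y, by simpa using hp.changeOrigin (y := y) (by simp)⟩

lemma EntireReal.differentiable {h : ℝ → ℝ} (hh : EntireReal h) : Differentiable ℝ h := by
  intro y
  obtain ⟨p, hp⟩ := hh.hasFPowerSeriesOnBall y
  exact hp.hasFPowerSeriesAt.differentiableAt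

/-- Leibniz rule for the Ψ-Riemann–Liouville fractional derivative. -/
theorem leibniz_psi_RL
    (a b : ℝ) (hab : a < b) (α : ℝ) (hα0 : 0 < α) (hα1 : α < 1)
    (Ψ : ℝ → ℝ)
    (hΨmono : StrictMonoOn Ψ (Set.Icc a b))
    (hΨC1 : ContDiffOn ℝ 1 Ψ (Set.Icc a b))
    (hΨpos : ∀ t ∈ Set.Icc a b, 0 < deriv Ψ t)
    (f g h w : ℝ → ℝ)
    (hf : f = fun t => h (Ψ t)) (hg : g = fun t => w (Ψ t))
    (hh : EntireReal h) (hw : EntireReal w)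
    (x : ℝ) (hx : x ∈ Set.Ioo a b) :
    HasSum
      (fun m : ℕ => genBinom α m * iteratedDeriv m h (Ψ x) * psiRLD a Ψ g (α - m) x)
      (psiRLD a Ψ (fun t => f t * g t) α x) := by
  subst hf hg
  obtain ⟨p, hp⟩ := hh.hasFPowerSeriesOnBall (Ψ x)
  exact leibniz_psi_RL_general hα1 hΨpos hx hp ENNReal.ofReal_lt_top
    hw.differentiable.continuous.continuousOn fun _ =>
      differentiableAt_rlI (sub_pos.2 hα1) (hΨmono.mapsTo_Ioo hx)
        hw.differentiable.continuous.continuousOn (hw.differentiable _)
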